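/- arXiv:1605.07330 — 4 statements merged into one kernel-verified Lean document; each statement's English description precedes it below -/
import Mathlib

section
/- K is an involutive monoid automorphism of (X,⋆): for all x, y ∈ X, K(x⋆y) = K(x)⋆K(y) and K(K(x)) = x, and K exchanges the generators, K((2)) = (1,1) and K((1,1)) = (2). -/
/-- Finite continued fraction `[0; n₁, …, n_k] = 1/(n₁ + 1/(n₂ + ⋯ + 1/n_k))`,
with the empty tuple giving `0`. -/
def cf : List ℕ → ℚ
  | [] => 0
  | n :: t => 1 / (n + cf t)

/-- `theta (n₁, …, n_k) = [0; n₁, …, n_k, 1]`. -/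
def theta (a : List ℕ) : ℚ := cf (a ++ [1])

/-- Membership in `X`: a nonempty tuple of positive integers. -/
def IsX (a : List ℕ) : Prop := a ≠ [] ∧ ∀ n ∈ a, 0 < n

/-- The monoid operation `⋆` on `X` (concatenation of paths in the Farey tree),
with the zero-elimination rules `(…, m, 0, n, …) = (…, m + n, …)` and a trailing
zero dropped, built into the definition. -/
def star (x y : List ℕ) : List ℕ :=
  match y with
  | [] => x
  | m :: rest =>
    if x.length % 2 = 0 then
      if m = 1 then
        match rest with
        | [] => x
        | m2 :: rest2 => x.dropLast ++ (x.getLastD 0 + m2) :: rest2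
      else x ++ (m - 1) :: rest
    else x.dropLast ++ (x.getLastD 0 + m - 1) :: rest

/-- The involution `K`: `K(1) = (1)`, `K(1, n₂, …, n_k) = (n₂+1, n₃, …, n_k)`,
and `K(n₁, …, n_k) = (1, n₁−1, n₂, …, n_k)` for `n₁ ≥ 2`. -/
def K : List ℕ → List ℕ
  | [] => []
  | [1] => [1]
  | 1 :: n :: rest => (n + 1) :: rest
  | n :: rest => 1 :: (n - 1) :: rest

/-- The Farey map on tuples: `(n₁, …, n_k) ↦ (n₁ − 1, n₂, …, n_k)` if `n₁ ≥ 2`,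
and `(1, n₂, …, n_k) ↦ (n₂, …, n_k)`. -/
def TF : List ℕ → List ℕ
  | [] => []
  | 1 :: rest => rest
  | n :: rest => (n - 1) :: rest

/-- The flipped Farey map (parent map in the Farey tree):
`(n₁, …, n_k) ↦ (n₁, …, n_k − 1)`, a trailing zero being dropped. -/
def TpF (a : List ℕ) : List ℕ := (TF a.reverse).reverse

/-- Auxiliary: continuant computed from the front. -/
def contAux : List ℕ → ℕ
  | [] => 1
  | [n] => n
  | n :: m :: rest => n * contAux (m :: rest) + contAux rest

/-- The continuant `⟨n₁, …, n_k⟩`: `⟨⟩ = 1`, `⟨n₁⟩ = n₁`,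
`⟨n₁, …, n_k⟩ = n_k ⟨n₁, …, n_{k−1}⟩ + ⟨n₁, …, n_{k−2}⟩`. -/
def cont (a : List ℕ) : ℕ := contAux a.reverse

/-- Length of the Farey interval `I(a)`, the interval with endpoints
`[0; n₁, …, n_{k−1}]` and `[0; n₁, …, n_k]`. -/
def ilen (a : List ℕ) : ℚ := |cf a - cf a.dropLast|

/-- Auxiliary for `J`: process the middle entries `n₂, …, n_{k−1}`, keeping the
output built so far in reversed order; an entry `n ≥ 2` contributes the block
`1_{n−2}, 2`, while an entry `n = 1` contributes `1_{−1}, 2`, which is resolved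
by the rule `(…, m, 1_{−1}, 2, …) = (…, m + 1, …)`. -/
def Jmid : List ℕ → List ℕ → List ℕ
  | [], out => out
  | n :: rest, out =>
    if n = 1 then
      Jmid rest (match out with
        | [] => [1]
        | h :: t => (h + 1) :: t)
    else
      Jmid rest (2 :: (List.replicate (n - 2) 1 ++ out))

/-- Dyer's involution `J` (jimm) on tuples: `J(n₁) = 1_{n₁}` and, for `k ≥ 2`,
`J(n₁, …, n_k) = (1_{n₁−1}, 2, 1_{n₂−2}, 2, …, 1_{n_{k−1}−2}, 2, 1_{n_k−1})`,
with `1_0` deleted and `1_{−1}` resolved by `(…, m, 1_{−1}, n, …) = (…, m+n−1, …)`. -/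
def J : List ℕ → List ℕ
  | [] => []
  | [n] => List.replicate n 1
  | n :: rest =>
      (Jmid rest.dropLast (2 :: List.replicate (n - 1) 1)).reverse
        ++ List.replicate (rest.getLastD 1 - 1) 1

/-!
A tuple `(n₁, …, n_k)` in `X` encodes the word `a^(n₁ - 1) b^n₂ a^n₃ ⋯` in two letters, and
distinct tuples encode distinct words. Under this encoding `⋆` becomes concatenation, the generators
`(2)` and `(1, 1)` become the letters `a` and `b`, and `K` becomes the exchange of the two letters,
which respects concatenation and is its own inverse.
-/

/-- The word made of runs of alternating letters, starting with the letter `b`, whose successive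
lengths are the given entries. The two letters are the two Booleans. -/
def runWord (b : Bool) : List ℕ → List Bool
  | [] => []
  | n :: t => List.replicate n b ++ runWord (!b) t

/-- The word in the generators that a tuple of `X` represents, with `true` standing for `(2)` and
`false` for `(1, 1)`. It has one letter less than the sum of the entries, so that `(1)` represents
the empty word. -/
def genWord : List ℕ → List Bool
  | [] => []
  | n :: t => runWord true ((n - 1) :: t)

theorem runWord_append (b : Bool) (s t : List ℕ) :
    runWord b (s ++ t) = runWord b s ++ runWord (not^[s.length] b) t := by
  induction s generalizing b with
  | nil => rfl
  | cons n s ih => simp [runWord, ih]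

theorem runWord_append_of_even {s : List ℕ} (hs : Even s.length) (b : Bool) (t : List ℕ) :
    runWord b (s ++ t) = runWord b s ++ runWord b t := by
  rw [runWord_append, Bool.involutive_not.iterate_even hs, id]

theorem runWord_append_of_odd {s : List ℕ} (hs : Odd s.length) (b : Bool) (t : List ℕ) :
    runWord b (s ++ t) = runWord b s ++ runWord (!b) t := by
  rw [runWord_append, Bool.involutive_not.iterate_odd hs]

theorem map_not_runWord (b : Bool) (t : List ℕ) :
    (runWord b t).map not = runWord (!b) t := by
  induction t generalizing b with
  | nil => rfl
  | cons n t ih => simp [runWord, ih]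

theorem head?_runWord_ne_not (b : Bool) {t : List ℕ} (ht : ∀ n ∈ t, 0 < n) :
    (runWord b t).head? ≠ some !b := by
  cases t with
  | nil => simp [runWord]
  | cons n t =>
    obtain ⟨n, rfl⟩ := Nat.exists_eq_add_one.mpr (ht n List.mem_cons_self)
    simp [runWord, List.replicate_succ]

theorem replicate_append_inj {α : Type*} {a : α} {u v : List α}
    (hu : u.head? ≠ some a) (hv : v.head? ≠ some a) {m n : ℕ}
    (h : List.replicate m a ++ u = List.replicate n a ++ v) : m = n ∧ u = v := by
  induction m generalizing n with
  | zero =>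
    cases n with
    | zero => exact ⟨rfl, h⟩
    | succ n => exact absurd (congrArg List.head? h) hu
  | succ m ih =>
    cases n with
    | zero => exact absurd (congrArg List.head? h).symm hv
    | succ n =>
      have tails_eq : List.replicate m a ++ u = List.replicate n a ++ v := by
        simpa [List.replicate_succ] using h
      simpa using ih tails_eq

theorem runWord_injOn (b : Bool) : Set.InjOn (runWord b) {t | ∀ n ∈ t, 0 < n} := by
  intro s hs t ht h
  induction s generalizing b t with
  | nil =>
    cases t with
    | nil => rfl
    | cons n t => simp_all [runWord]
  | cons m s ih =>
    cases t with
    | nil => simp_all [runWord]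
    | cons n t =>
      have hs' := (List.forall_mem_cons.mp hs).2
      have ht' := (List.forall_mem_cons.mp ht).2
      obtain ⟨rfl, tails_eq⟩ := replicate_append_inj
        (by simpa using head?_runWord_ne_not (!b) hs')
        (by simpa using head?_runWord_ne_not (!b) ht') h
      rw [ih (!b) hs' ht' tails_eq]

theorem isX_append_cons {s t : List ℕ} {n : ℕ} :
    IsX (s ++ n :: t) ↔ (∀ k ∈ s, 0 < k) ∧ 0 < n ∧ ∀ k ∈ t, 0 < k := by
  simp only [IsX, ne_eq, List.append_eq_nil_iff, reduceCtorEq, and_false, not_false_eq_true,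
    true_and, List.forall_mem_append, List.forall_mem_cons]

theorem exists_eq_concat_of_ne_nil {α : Type*} {l : List α} (hl : l ≠ []) :
    ∃ s a, l = s ++ [a] :=
  ⟨_, _, (List.dropLast_concat_getLast hl).symm⟩

theorem IsX.exists_eq_cons {x : List ℕ} (hx : IsX x) : ∃ n t, x = (n + 1) :: t := by
  obtain ⟨n, t, rfl⟩ := List.exists_cons_of_ne_nil hx.1
  obtain ⟨n, rfl⟩ := Nat.exists_eq_add_one.mpr (hx.2 n List.mem_cons_self)
  exact ⟨n, t, rfl⟩

theorem IsX.runWord_true {x : List ℕ} (hx : IsX x) : runWord true x = true :: genWord x := by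
  obtain ⟨n, t, rfl⟩ := hx.exists_eq_cons
  rfl

theorem genWord_injOn : Set.InjOn genWord {x | IsX x} := by
  intro x hx y hy h
  refine runWord_injOn true hx.2 hy.2 ?_
  rw [hx.runWord_true, hy.runWord_true, h]

section Star

variable {s : List ℕ} (n m : ℕ) (t : List ℕ)

theorem star_concat_of_even (hs : Even s.length) :
    star (s ++ [n]) ((m + 1) :: t) = s ++ (n + m) :: t := by
  have : (s.length + 1) % 2 = 1 := Nat.odd_iff.mp hs.add_one
  simp [_root_.star, this]

theorem star_concat_singleton_one_of_odd (hs : Odd s.length) :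
    star (s ++ [n]) [1] = s ++ [n] := by
  have : (s.length + 1) % 2 = 0 := Nat.even_iff.mp hs.add_one
  simp [_root_.star, this]

theorem star_concat_one_cons_of_odd (hs : Odd s.length) :
    star (s ++ [n]) (1 :: m :: t) = s ++ (n + m) :: t := by
  have : (s.length + 1) % 2 = 0 := Nat.even_iff.mp hs.add_one
  simp [_root_.star, this]

theorem star_concat_add_two_cons_of_odd (hs : Odd s.length) :
    star (s ++ [n]) ((m + 2) :: t) = s ++ n :: (m + 1) :: t := by
  have : (s.length + 1) % 2 = 0 := Nat.even_iff.mp hs.add_one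
  simp [_root_.star, this]

end Star

theorem isX_star {x y : List ℕ} (hx : IsX x) (hy : IsX y) : IsX (star x y) := by
  obtain ⟨s, n, rfl⟩ := exists_eq_concat_of_ne_nil hx.1
  obtain ⟨hs, hn, -⟩ := isX_append_cons.mp hx
  obtain ⟨m, t, rfl⟩ := hy.exists_eq_cons
  have ht : ∀ k ∈ t, 0 < k := (List.forall_mem_cons.mp hy.2).2
  rcases s.length.even_or_odd with even | odd
  · rw [star_concat_of_even n m t even]
    exact isX_append_cons.mpr ⟨hs, by omega, ht⟩
  · match m, t with
    | 0, [] => rwa [star_concat_singleton_one_of_odd n odd]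
    | 0, m :: t =>
      rw [star_concat_one_cons_of_odd n m t odd]
      exact isX_append_cons.mpr ⟨hs, by omega, (List.forall_mem_cons.mp ht).2⟩
    | m + 1, t =>
      rw [star_concat_add_two_cons_of_odd n m t odd]
      exact isX_append_cons.mpr ⟨hs, hn, List.forall_mem_cons.mpr ⟨by omega, ht⟩⟩

theorem runWord_true_star {x y : List ℕ} (hx : x ≠ []) (hy : IsX y) :
    runWord true (star x y) = runWord true x ++ genWord y := by
  obtain ⟨s, n, rfl⟩ := exists_eq_concat_of_ne_nil hx
  obtain ⟨m, t, rfl⟩ := hy.exists_eq_cons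
  rcases s.length.even_or_odd with even | odd
  · rw [star_concat_of_even n m t even]
    simp [runWord_append_of_even even, genWord, runWord, List.replicate_add,
      -List.replicate_append_replicate]
  · match m, t with
    | 0, [] =>
      rw [star_concat_singleton_one_of_odd n odd]
      simp [genWord, runWord]
    | 0, m :: t =>
      rw [star_concat_one_cons_of_odd n m t odd]
      simp [runWord_append_of_odd odd, genWord, runWord, List.replicate_add,
        -List.replicate_append_replicate]
    | m + 1, t =>
      rw [star_concat_add_two_cons_of_odd n m t odd]
      simp [runWord_append_of_odd odd, genWord, runWord]

theorem genWord_star {x y : List ℕ} (hx : IsX x) (hy : IsX y) :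
    genWord (star x y) = genWord x ++ genWord y := by
  have h := runWord_true_star hx.1 hy
  rw [(isX_star hx hy).runWord_true, hx.runWord_true, List.cons_append] at h
  exact List.tail_eq_of_cons_eq h

theorem isX_K {x : List ℕ} (hx : IsX x) : IsX (K x) := by
  obtain ⟨n, t, rfl⟩ := hx.exists_eq_cons
  match n, t with
  | 0, [] => exact hx
  | 0, n :: t => simp_all [IsX, K]
  | n + 1, t => simp_all [IsX, K]

theorem genWord_K (x : List ℕ) : genWord (K x) = (genWord x).map not := by
  match x with
  | [] => rfl
  | [1] => rfl
  | 1 :: n :: t => simp [K, genWord, runWord, map_not_runWord]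
  | 0 :: t => simp [K, genWord, runWord, map_not_runWord]
  | (n + 2) :: t => simp [K, genWord, runWord, map_not_runWord]

theorem K_star {x y : List ℕ} (hx : IsX x) (hy : IsX y) :
    K (star x y) = star (K x) (K y) := by
  refine genWord_injOn (isX_K (isX_star hx hy)) (isX_star (isX_K hx) (isX_K hy)) ?_
  calc genWord (K (star x y))
      = (genWord x ++ genWord y).map not := by rw [genWord_K, genWord_star hx hy]
    _ = genWord (K x) ++ genWord (K y) := by rw [List.map_append, genWord_K, genWord_K]
    _ = genWord (star (K x) (K y)) := (genWord_star (isX_K hx) (isX_K hy)).symm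

theorem K_K {x : List ℕ} (hx : IsX x) : K (K x) = x := by
  refine genWord_injOn (isX_K (isX_K hx)) hx ?_
  rw [genWord_K, genWord_K, List.map_map, Bool.involutive_not.comp_self, List.map_id]

/-- `K` is an involutive monoid automorphism of `(X, ⋆)` exchanging the
generators `(2)` and `(1,1)`. -/
theorem K_involutive_automorphism :
    (∀ x y : List ℕ, IsX x → IsX y → K (star x y) = star (K x) (K y)) ∧
    (∀ x : List ℕ, IsX x → K (K x) = x) ∧
    K [2] = [1, 1] ∧ K [1, 1] = [2] := by
  exact ⟨fun _ _ hx hy => K_star hx hy, fun _ hx => K_K hx, rfl, rfl⟩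
end

section
/- J commutes with the Farey map: for every a ∈ X with a ≠ (1), J(T_F(a)) = T_F(J(a)). -/
/-!
The Farey map has two inverse branches on `X`: putting a `1` in front of a tuple, and adding `1` to
its first entry. Every tuple other than `(1)` is the image of exactly one tuple of `X` under exactly
one of the branches, and `J` interchanges the branches: `J (1, b)` is `J b` with its first entry
increased by `1`, and `J (n₁ + 1, n₂, …) = (1, J (n₁, n₂, …))`. The rule for `1_{-1}` is what makes
the first identity hold also when `b` begins with a `1`.
-/

theorem TF_one_cons (r : List ℕ) : TF (1 :: r) = r := rfl

theorem TF_succ_cons (n : ℕ) (r : List ℕ) : TF ((n + 2) :: r) = (n + 1) :: r := rfl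

namespace IsX

theorem exists_eq_succ_cons {a : List ℕ} (ha : IsX a) : ∃ n r, a = (n + 1) :: r := by
  obtain ⟨hne, hpos⟩ := ha
  obtain ⟨n, r, rfl⟩ := List.exists_cons_of_ne_nil hne
  exact ⟨n - 1, r, by rw [Nat.sub_add_cancel (hpos n List.mem_cons_self)]⟩

theorem singleton_one : IsX [1] := ⟨by decide, by decide⟩

theorem one_cons {b : List ℕ} (hb : IsX b) : IsX (1 :: b) :=
  ⟨List.cons_ne_nil 1 b, List.forall_mem_cons.mpr ⟨Nat.one_pos, hb.2⟩⟩

theorem succ_cons {n : ℕ} {r : List ℕ} (h : IsX (n :: r)) : IsX ((n + 1) :: r) :=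
  ⟨List.cons_ne_nil (n + 1) r,
    List.forall_mem_cons.mpr ⟨n.succ_pos, (List.forall_mem_cons.mp h.2).2⟩⟩

@[elab_as_elim]
theorem induction_on {P : ∀ a, IsX a → Prop} {a : List ℕ} (ha : IsX a)
    (singleton_one : P [1] singleton_one)
    (one_cons : ∀ b (hb : IsX b), P b hb → P (1 :: b) hb.one_cons)
    (succ_cons : ∀ n r (h : IsX ((n + 1) :: r)), P ((n + 1) :: r) h →
      P ((n + 2) :: r) h.succ_cons) : P a ha := by
  obtain ⟨n, r, rfl⟩ := ha.exists_eq_succ_cons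
  have hr : ∀ m ∈ r, 0 < m := (List.forall_mem_cons.mp ha.2).2
  induction r generalizing n with
  | nil =>
    induction n with
    | zero => exact singleton_one
    | succ n ih =>
      have h : IsX [n + 1] := ⟨List.cons_ne_nil _ _, by simp⟩
      exact succ_cons n [] h (ih h)
  | cons m r ih_tail =>
    induction n with
    | zero =>
      have hb : IsX (m :: r) := ⟨List.cons_ne_nil m r, hr⟩
      obtain ⟨k, _, ⟨⟩⟩ := hb.exists_eq_succ_cons
      exact one_cons _ hb (ih_tail k hb (List.forall_mem_cons.mp hr).2)
    | succ n ih =>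
      have h : IsX ((n + 1) :: m :: r) :=
        ⟨List.cons_ne_nil _ _, List.forall_mem_cons.mpr ⟨n.succ_pos, hr⟩⟩
      exact succ_cons n (m :: r) h (ih h)

end IsX

theorem Jmid_append (l : List ℕ) {out : List ℕ} (hout : out ≠ []) (s : List ℕ) :
    Jmid l (out ++ s) = Jmid l out ++ s := by
  induction l generalizing out with
  | nil => rfl
  | cons n l ih =>
    obtain ⟨c, t, rfl⟩ := List.exists_cons_of_ne_nil hout
    by_cases hn : n = 1
    · simpa [Jmid, hn] using ih (List.cons_ne_nil (c + 1) t)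
    · simp only [Jmid, hn, if_false, ← List.cons_append, ← List.append_assoc]
      exact ih (List.cons_ne_nil _ _)

-- The accumulator is reversed, so its last entry becomes the first entry of the output.
theorem reverse_Jmid_concat_succ_append (l out : List ℕ) (n : ℕ) (s : List ℕ) :
    (Jmid l (out ++ [n + 1])).reverse ++ s =
      ((Jmid l (out ++ [n])).reverse ++ s).modifyHead (· + 1) := by
  induction l generalizing out n with
  | nil => simp [Jmid]
  | cons k l ih =>
    by_cases hk : k = 1
    · cases out with
      | nil => simpa [Jmid, hk] using ih [] (n + 1)
      | cons c t => simpa [Jmid, hk] using ih ((c + 1) :: t) n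
    · simp only [Jmid, hk, if_false, ← List.append_assoc, ← List.cons_append]
      exact ih (2 :: (List.replicate (k - 2) 1 ++ out)) n

theorem J_cons_concat (n : ℕ) (l : List ℕ) (z : ℕ) :
    J (n :: (l ++ [z])) =
      (Jmid l (2 :: List.replicate (n - 1) 1)).reverse ++ List.replicate (z - 1) 1 := by
  rw [J, List.dropLast_concat, List.getLastD_concat]
  simp

theorem J_succ_cons (n : ℕ) (r : List ℕ) : J ((n + 2) :: r) = 1 :: J ((n + 1) :: r) := by
  rcases r.eq_nil_or_concat' with rfl | ⟨l, z, rfl⟩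
  · rfl
  · have Jmid_replicate_succ : Jmid l (2 :: List.replicate (n + 1) 1) =
        Jmid l (2 :: List.replicate n 1) ++ [1] := by
      rw [List.replicate_succ', ← List.cons_append, Jmid_append l (List.cons_ne_nil _ _)]
    simp [J_cons_concat, Jmid_replicate_succ]

theorem J_one_cons (m : ℕ) (r : List ℕ) :
    J (1 :: (m + 1) :: r) = (J ((m + 1) :: r)).modifyHead (· + 1) := by
  rcases r.eq_nil_or_concat' with rfl | ⟨l, z, rfl⟩
  · rfl
  · rw [← List.cons_append, J_cons_concat, List.cons_append, J_cons_concat]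
    cases m with
    | zero => exact reverse_Jmid_concat_succ_append l [] 2 _
    | succ m =>
      simpa [Jmid, List.replicate_succ'] using
        reverse_Jmid_concat_succ_append l (2 :: List.replicate m 1) 1 (List.replicate (z - 1) 1)

theorem IsX.map_J {a : List ℕ} (ha : IsX a) : IsX (J a) := by
  induction ha using IsX.induction_on with
  | singleton_one => exact .singleton_one
  | one_cons b hb ih =>
    obtain ⟨m, r, rfl⟩ := hb.exists_eq_succ_cons
    obtain ⟨k, t, hJ⟩ := ih.exists_eq_succ_cons
    rw [J_one_cons, hJ]
    exact (hJ ▸ ih).succ_cons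
  | succ_cons n r _ ih => exact J_succ_cons n r ▸ ih.one_cons

/-- `J` commutes with the Farey map. -/
theorem J_comm_TF (a : List ℕ) (h : IsX a) (h1 : a ≠ [1]) :
    J (TF a) = TF (J a) := by
  induction h using IsX.induction_on with
  | singleton_one => exact absurd rfl h1
  | one_cons b hb =>
    obtain ⟨m, r, rfl⟩ := hb.exists_eq_succ_cons
    obtain ⟨k, t, hJ⟩ := hb.map_J.exists_eq_succ_cons
    rw [TF_one_cons, J_one_cons, hJ, List.modifyHead_cons, TF_succ_cons]
  | succ_cons n r => rw [TF_succ_cons, J_succ_cons, TF_one_cons]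
end

section
/- The Lebesgue transition function is symmetric under J: for every a ∈ X with a ≠ (1), Π(J(a)) = J(Π(a)), where Π : X → X represents the Lebesgue transition function in the sense that θ(Π(a)) = π_λ(a) = |I(a)|/|I(T_{φF}(a))|. -/
/-- The tuple-level Lebesgue transition function `Π`:
`Π(n₁) = (1, n₁ − 2)` and, for `k ≥ 2`,
`Π(n₁, …, n_k) = (1, n_k − 1, n_{k−1}, …, n₂, n₁ − 1)`, with zero entries
eliminated by `(…, m, 0, n, …) = (…, m + n, …)`, `(0, n, …) = (n, …)`, and a
trailing zero dropped. -/
def PiL (a : List ℕ) : List ℕ :=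
  match a.reverse with
  | [] => []
  | [n] => if n ≤ 2 then [1] else [1, n - 2]
  | m :: t =>
      let t' := t.dropLast ++ (if t.getLastD 1 = 1 then [] else [t.getLastD 1 - 1])
      if m = 1 then
        match t' with
        | [] => [1]
        | h :: t2 => (1 + h) :: t2
      else 1 :: (m - 1) :: t'

/-!
Read an element of `X` as a path in the Farey tree starting at the root `(1)`, that is, as a
binary word `w`.  In these coordinates `J` complements every letter, `K` complements the first
one, reversing a tuple reverses the word, and `T_{φF}` drops the last letter.  Since
`Π = K ∘ T_{φF} ∘ reversal`, it commutes with `J`.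

The interval of `w` has endpoints `F_w 0` and `F_w 1`, where `F_w` composes the inverse branches
`x / (1 + x)` and `1 / (1 + x)` of the Farey map.  The mediant `F_w (1 / 2)` divides it, from
`F_w 0` to `F_w 1`, in the ratio `1 : ρ`, where `ρ = F_{wʳ} 1` belongs to the reversed word `wʳ`.
Hence the child `a = (n₁, …, n_k)` of `w` along the letter `b` has relative length
`1 - F_b ρ = 1 - [0; n_k, …, n₁]`.  This is `θ(Π a)`, because `θ ∘ K = 1 - θ` and
`θ(T_{φF} c) = [0; c]`.
-/

theorem exists_eq_concat {α : Type*} {l : List α} (hl : l ≠ []) : ∃ s x, l = s ++ [x] :=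
  ⟨l.dropLast, l.getLast hl, (List.dropLast_concat_getLast hl).symm⟩

section Coding

/-- The tuple in `X` coded by a path in the Farey tree starting at the root `(1)`: read from the
last letter to the first, `true` prepends an entry `1` and `false` increments the first entry. -/
def tupleOfPath : List Bool → List ℕ
  | [] => [1]
  | true :: w => 1 :: tupleOfPath w
  | false :: w => (tupleOfPath w).modifyHead (· + 1)

theorem exists_tupleOfPath_eq_cons (w : List Bool) : ∃ n t, tupleOfPath w = (n + 1) :: t := by
  induction w with
  | nil => exact ⟨0, [], rfl⟩
  | cons b w ih =>
    obtain ⟨n, t, e⟩ := ih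
    cases b
    · exact ⟨n + 1, t, by rw [tupleOfPath, e, List.modifyHead_cons]⟩
    · exact ⟨0, tupleOfPath w, rfl⟩

theorem tupleOfPath_ne_nil (w : List Bool) : tupleOfPath w ≠ [] := by
  obtain ⟨n, t, e⟩ := exists_tupleOfPath_eq_cons w
  simp [e]

theorem isX_tupleOfPath (w : List Bool) : IsX (tupleOfPath w) := by
  refine ⟨tupleOfPath_ne_nil w, ?_⟩
  induction w with
  | nil => simp [tupleOfPath]
  | cons b w ih =>
    cases b
    · obtain ⟨n, t, e⟩ := exists_tupleOfPath_eq_cons w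
      simp_all [tupleOfPath]
    · simpa [tupleOfPath] using ih

theorem tupleOfPath_eq_singleton_one_iff {w : List Bool} : tupleOfPath w = [1] ↔ w = [] := by
  rcases w with _ | ⟨_ | _, w⟩
  · simp [tupleOfPath]
  · obtain ⟨n, t, e⟩ := exists_tupleOfPath_eq_cons w
    simp [tupleOfPath, e]
  · simp [tupleOfPath, tupleOfPath_ne_nil]

theorem exists_tupleOfPath_eq {a : List ℕ} (ha : IsX a) : ∃ w, tupleOfPath w = a := by
  obtain ⟨hne, hpos⟩ := ha
  induction a with
  | nil => exact absurd rfl hne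
  | cons n t ih =>
    rw [List.forall_mem_cons] at hpos
    have h_one : ∃ w, tupleOfPath w = 1 :: t := by
      rcases eq_or_ne t [] with rfl | ht
      · exact ⟨[], rfl⟩
      · obtain ⟨w, e⟩ := ih ht hpos.2
        exact ⟨true :: w, by rw [tupleOfPath, e]⟩
    induction n, hpos.1 using Nat.le_induction with
    | base => exact h_one
    | succ k hk ihk =>
      obtain ⟨w, e⟩ := ihk (by simp) ⟨hk, hpos.2⟩
      exact ⟨false :: w, by rw [tupleOfPath, e, List.modifyHead_cons]⟩

theorem exists_path_ne_nil {a : List ℕ} (ha : IsX a) (ha1 : a ≠ [1]) :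
    ∃ w ≠ [], tupleOfPath w = a := by
  obtain ⟨w, rfl⟩ := exists_tupleOfPath_eq ha
  exact ⟨w, mt tupleOfPath_eq_singleton_one_iff.2 ha1, rfl⟩

theorem tupleOfPath_concat_true (w : List Bool) :
    tupleOfPath (w ++ [true]) = tupleOfPath w ++ [1] := by
  induction w with
  | nil => rfl
  | cons b w ih =>
    obtain ⟨n, t, e⟩ := exists_tupleOfPath_eq_cons w
    cases b <;> simp [tupleOfPath, ih, e]

theorem exists_tupleOfPath_concat_false (w : List Bool) :
    ∃ s n, tupleOfPath w = s ++ [n] ∧ tupleOfPath (w ++ [false]) = s ++ [n + 1] := by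
  induction w with
  | nil => exact ⟨[], 1, rfl, rfl⟩
  | cons b w ih =>
    obtain ⟨s, n, e, e_false⟩ := ih
    rcases b with _ | _
    · rcases s with _ | ⟨m, s⟩
      · exact ⟨[], n + 1, by simp [tupleOfPath, e], by simp [tupleOfPath, e_false]⟩
      · exact ⟨(m + 1) :: s, n, by simp [tupleOfPath, e], by simp [tupleOfPath, e_false]⟩
    · exact ⟨1 :: s, n, by simp [tupleOfPath, e], by simp [tupleOfPath, e_false]⟩

theorem tupleOfPath_reverse (w : List Bool) : tupleOfPath w.reverse = (tupleOfPath w).reverse := by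
  induction w with
  | nil => rfl
  | cons b w ih =>
    rw [List.reverse_cons]
    cases b
    · obtain ⟨s, n, e, e_false⟩ := exists_tupleOfPath_concat_false w.reverse
      have hw : tupleOfPath w = n :: s.reverse := by
        simpa [e] using (congrArg List.reverse ih).symm
      simp [tupleOfPath, e_false, hw]
    · rw [tupleOfPath_concat_true, ih, tupleOfPath, List.reverse_cons]

end Coding

section FareyMaps

theorem TF_tupleOfPath_cons (b : Bool) (w : List Bool) :
    TF (tupleOfPath (b :: w)) = tupleOfPath w := by
  cases b
  · obtain ⟨n, t, e⟩ := exists_tupleOfPath_eq_cons w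
    simp [tupleOfPath, e, TF]
  · rfl

theorem TpF_tupleOfPath {w : List Bool} (hw : w ≠ []) :
    TpF (tupleOfPath w) = tupleOfPath w.dropLast := by
  obtain ⟨v, b, rfl⟩ := exists_eq_concat hw
  rw [TpF, ← tupleOfPath_reverse, List.reverse_concat, TF_tupleOfPath_cons,
    tupleOfPath_reverse, List.reverse_reverse, List.dropLast_concat]

theorem K_tupleOfPath (w : List Bool) : K (tupleOfPath w) = tupleOfPath (w.modifyHead not) := by
  rcases w with _ | ⟨b, w⟩
  · rfl
  · obtain ⟨n, t, e⟩ := exists_tupleOfPath_eq_cons w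
    cases b <;> simp [tupleOfPath, e, K]

end FareyMaps

section Jimm

theorem Jmid_cons_append (l out s : List ℕ) (h : ℕ) :
    Jmid l (h :: (out ++ s)) = Jmid l (h :: out) ++ s := by
  induction l generalizing h out with
  | nil => rfl
  | cons n l ih =>
    by_cases hn : n = 1
    · simp only [Jmid, hn, if_true, ih]
    · simp only [Jmid, hn, if_false, ← ih, List.append_assoc, List.cons_append]

theorem reverse_Jmid_singleton_succ_append (l r : List ℕ) (h : ℕ) :
    (Jmid l [h + 1]).reverse ++ r = ((Jmid l [h]).reverse ++ r).modifyHead (· + 1) := by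
  induction l generalizing h with
  | nil => rfl
  | cons n l ih =>
    by_cases hn : n = 1
    · simp only [Jmid, hn, if_true, ih]
    · simp [Jmid, hn, Jmid_cons_append]

theorem J_add_two_cons (n : ℕ) (t : List ℕ) : J ((n + 2) :: t) = 1 :: J ((n + 1) :: t) := by
  rcases t with _ | ⟨m, t⟩
  · rfl
  · simp [J, List.replicate_succ', Jmid_cons_append]

theorem J_one_cons_succ_cons (n : ℕ) (t : List ℕ) :
    J (1 :: (n + 1) :: t) = (J ((n + 1) :: t)).modifyHead (· + 1) := by
  rcases t with _ | ⟨m, t⟩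
  · simp [J, Jmid, List.replicate_succ]
  · rcases n with _ | n
    · simpa [J, Jmid] using reverse_Jmid_singleton_succ_append _ _ 2
    · rw [J_add_two_cons]
      simp [J, Jmid, Jmid_cons_append]

theorem J_tupleOfPath (w : List Bool) : J (tupleOfPath w) = tupleOfPath (w.map not) := by
  induction w with
  | nil => rfl
  | cons b w ih =>
    obtain ⟨n, t, e⟩ := exists_tupleOfPath_eq_cons w
    cases b
    · simp only [tupleOfPath, List.map_cons, Bool.not_false, ← ih, e, List.modifyHead_cons]
      exact J_add_two_cons n t
    · simp only [tupleOfPath, List.map_cons, Bool.not_true, ← ih, e]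
      exact J_one_cons_succ_cons n t

end Jimm

section LebesgueTransition

theorem TpF_eq_dropLast_append {l : List ℕ} (hl : l ≠ []) :
    TpF l = l.dropLast ++ if l.getLastD 1 = 1 then [] else [l.getLastD 1 - 1] := by
  obtain ⟨s, n, rfl⟩ := exists_eq_concat hl
  rw [List.dropLast_concat, List.getLastD_concat]
  by_cases hn : n = 1 <;> simp [TpF, TF, hn]

theorem TpF_cons {l : List ℕ} (hl : l ≠ []) (m : ℕ) : TpF (m :: l) = m :: TpF l := by
  obtain ⟨s, n, rfl⟩ := exists_eq_concat hl
  by_cases hn : n = 1 <;> simp [TpF, TF, hn]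

theorem PiL_eq_K_TpF_reverse {a : List ℕ} (ha : IsX a) (ha1 : a ≠ [1]) :
    PiL a = K (TpF a.reverse) := by
  obtain ⟨r, rfl⟩ : ∃ r : List ℕ, a = r.reverse := ⟨a.reverse, a.reverse_reverse.symm⟩
  have hpos : ∀ n ∈ r, 0 < n := fun n hn => ha.2 n (List.mem_reverse.2 hn)
  rw [PiL, List.reverse_reverse]
  match r, hpos with
  | [], _ => rfl
  | [0], hpos => simp at hpos
  | [1], _ => exact absurd rfl ha1
  | [2], _ => rfl
  | [n + 3], _ => simp [TpF, TF, K]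
  | m :: k :: t, hpos =>
    have ht : k :: t ≠ [] := List.cons_ne_nil k t
    simp only [← TpF_eq_dropLast_append ht, TpF_cons ht]
    obtain ⟨_ | m, rfl⟩ := Nat.exists_eq_add_of_le' (hpos m (by simp))
    · cases TpF (k :: t) <;> simp [K, add_comm]
    · simp [K]

theorem PiL_tupleOfPath {w : List Bool} (hw : w ≠ []) :
    PiL (tupleOfPath w) = K (tupleOfPath w.reverse.dropLast) := by
  rw [PiL_eq_K_TpF_reverse (isX_tupleOfPath w) (mt tupleOfPath_eq_singleton_one_iff.1 hw),
    ← tupleOfPath_reverse, TpF_tupleOfPath (List.reverse_ne_nil_iff.2 hw)]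

theorem J_K_tupleOfPath (w : List Bool) : J (K (tupleOfPath w)) = K (J (tupleOfPath w)) := by
  simp only [K_tupleOfPath, J_tupleOfPath]
  cases w <;> rfl

theorem PiL_J {a : List ℕ} (ha : IsX a) (ha1 : a ≠ [1]) : PiL (J a) = J (PiL a) := by
  obtain ⟨w, hw, rfl⟩ := exists_path_ne_nil ha ha1
  rw [J_tupleOfPath, PiL_tupleOfPath (by simpa using hw), PiL_tupleOfPath hw, J_K_tupleOfPath,
    J_tupleOfPath, List.map_dropLast, List.map_reverse]

end LebesgueTransition

section Branches

variable {𝕜 : Type*} [Field 𝕜]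

/-- The inverse branches of the Farey map on `[0, 1]`, with `false` for the branch fixing `0`. -/
def fareyBranch : Bool → 𝕜 → 𝕜
  | false, x => x / (1 + x)
  | true, x => 1 / (1 + x)

/-- The composition of inverse branches of the Farey map along a path, the first letter being
applied last. -/
def pathMap (w : List Bool) (x : 𝕜) : 𝕜 := w.foldr fareyBranch x

theorem pathMap_cons (b : Bool) (w : List Bool) (x : 𝕜) :
    pathMap (b :: w) x = fareyBranch b (pathMap w x) := rfl

theorem pathMap_concat (w : List Bool) (b : Bool) (x : 𝕜) :
    pathMap (w ++ [b]) x = pathMap w (fareyBranch b x) := List.foldr_append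

theorem fareyBranch_one (b : Bool) : fareyBranch b (1 : 𝕜) = 1 / 2 := by
  cases b <;> norm_num [fareyBranch]

variable [LinearOrder 𝕜] [IsStrictOrderedRing 𝕜]

theorem fareyBranch_nonneg (b : Bool) {x : 𝕜} (hx : 0 ≤ x) : 0 ≤ fareyBranch b x := by
  cases b <;> simp only [fareyBranch] <;> positivity

theorem fareyBranch_pos (b : Bool) {x : 𝕜} (hx : 0 < x) : 0 < fareyBranch b x := by
  cases b <;> simp only [fareyBranch] <;> positivity

theorem fareyBranch_not (b : Bool) {x : 𝕜} (hx : 0 ≤ x) :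
    fareyBranch (!b) x = 1 - fareyBranch b x := by
  have : 1 + x ≠ 0 := by positivity
  cases b <;> simp only [fareyBranch, Bool.not_false, Bool.not_true] <;> field_simp <;> ring

theorem fareyBranch_lt_one (b : Bool) {x : 𝕜} (hx : 0 < x) : fareyBranch b x < 1 := by
  rw [← sub_pos, ← fareyBranch_not b hx.le]
  exact fareyBranch_pos _ hx

theorem pathMap_nonneg (w : List Bool) {x : 𝕜} (hx : 0 ≤ x) : 0 ≤ pathMap w x := by
  induction w with
  | nil => exact hx
  | cons b w ih => exact fareyBranch_nonneg b ih

theorem pathMap_one_pos (w : List Bool) : 0 < pathMap w (1 : 𝕜) := by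
  induction w with
  | nil => exact one_pos
  | cons b w ih => exact fareyBranch_pos b ih

/-- Cleared of denominators, this says `(F x - F 0) / (F 1 - F 0) = x / (ρ + (1 - ρ) x)`: the
determinant of a Möbius map `F` cancels, leaving only the ratio `ρ` of its denominators at `0`
and `1`. -/
theorem pathMap_interpolation (w : List Bool) {x : 𝕜} (hx : 0 ≤ x) :
    (pathMap w.reverse 1 + (1 - pathMap w.reverse 1) * x) * (pathMap w x - pathMap w 0) =
      x * (pathMap w 1 - pathMap w 0) := by
  induction w using List.reverseRecOn generalizing x with
  | nil => simp [pathMap]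
  | append_singleton w b ih =>
    have h_half := ih (x := 1 / 2) (by positivity)
    have h_x := ih (fareyBranch_nonneg b hx)
    simp only [pathMap_concat, List.reverse_concat, pathMap_cons, fareyBranch_one]
    have hρ := pathMap_one_pos (𝕜 := 𝕜) w.reverse
    generalize pathMap w.reverse (1 : 𝕜) = ρ at hρ h_half h_x ⊢
    cases b <;> simp only [fareyBranch, add_zero, div_one] at h_x ⊢ <;>
      field_simp at h_half h_x ⊢ <;> linear_combination h_x - x * h_half

theorem pathMap_one_half (w : List Bool) :
    pathMap w (1 / 2 : 𝕜) =
      pathMap w 0 + (pathMap w 1 - pathMap w 0) / (1 + pathMap w.reverse 1) := by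
  have hρ := pathMap_one_pos (𝕜 := 𝕜) w.reverse
  have h := pathMap_interpolation w (x := (1 / 2 : 𝕜)) (by positivity)
  field_simp at h ⊢
  linear_combination h

theorem abs_pathMap_concat_sub (w : List Bool) (b : Bool) :
    |pathMap (w ++ [b]) (1 : 𝕜) - pathMap (w ++ [b]) 0| =
      (1 - pathMap (b :: w.reverse) 1) * |pathMap w (1 : 𝕜) - pathMap w 0| := by
  have hρ := pathMap_one_pos (𝕜 := 𝕜) w.reverse
  have hpos : 0 < fareyBranch (!b) (pathMap w.reverse (1 : 𝕜)) := fareyBranch_pos _ hρ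
  rw [pathMap_cons, ← fareyBranch_not b hρ.le, ← abs_of_pos hpos, ← abs_mul, pathMap_concat,
    pathMap_concat, fareyBranch_one, pathMap_one_half]
  cases b
  · congr 1
    simp only [fareyBranch, Bool.not_false, zero_div]
    ring
  · rw [abs_sub_comm]
    congr 1
    simp only [fareyBranch, Bool.not_true, add_zero, div_one]
    field_simp
    ring

theorem pathMap_one_ne_pathMap_zero (w : List Bool) : pathMap w (1 : 𝕜) ≠ pathMap w 0 := by
  induction w using List.reverseRecOn with
  | nil => simp [pathMap]
  | append_singleton w b ih =>
    rw [← sub_ne_zero, ← abs_pos, abs_pathMap_concat_sub]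
    have hlt : pathMap (b :: w.reverse) (1 : 𝕜) < 1 :=
      fareyBranch_lt_one b (pathMap_one_pos w.reverse)
    exact mul_pos (sub_pos.2 hlt) (abs_pos.2 (sub_ne_zero.2 ih))

end Branches

section ContinuedFractions

theorem cf_nonneg (l : List ℕ) : 0 ≤ cf l := by
  induction l with
  | nil => exact le_rfl
  | cons n t ih => rw [cf]; positivity

theorem cf_one_cons (l : List ℕ) : cf (1 :: l) = fareyBranch true (cf l) := by
  rw [cf, fareyBranch, Nat.cast_one]

theorem cf_modifyHead_succ {l : List ℕ} (hl : ∀ n ∈ l, 0 < n) :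
    cf (l.modifyHead (· + 1)) = fareyBranch false (cf l) := by
  rcases l with _ | ⟨n, t⟩
  · simp [cf, fareyBranch]
  · have hn : 0 < n := hl n (by simp)
    have ht := cf_nonneg t
    simp only [List.modifyHead_cons, cf, fareyBranch, Nat.cast_add, Nat.cast_one]
    field_simp
    ring

theorem cf_tupleOfPath (w : List Bool) : cf (tupleOfPath w) = pathMap w 1 := by
  induction w with
  | nil => simp [tupleOfPath, cf, pathMap]
  | cons b w ih =>
    rw [pathMap_cons, ← ih]
    cases b
    · exact cf_modifyHead_succ (isX_tupleOfPath w).2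
    · exact cf_one_cons _

theorem cf_dropLast_tupleOfPath (w : List Bool) : cf (tupleOfPath w).dropLast = pathMap w 0 := by
  induction w with
  | nil => rfl
  | cons b w ih =>
    rw [pathMap_cons, ← ih]
    cases b
    · rw [← cf_modifyHead_succ fun n hn => (isX_tupleOfPath w).2 n (List.mem_of_mem_dropLast hn)]
      obtain ⟨n, t, e⟩ := exists_tupleOfPath_eq_cons w
      cases t <;> simp [tupleOfPath, e]
    · rw [tupleOfPath, List.dropLast_cons_of_ne_nil (tupleOfPath_ne_nil w), cf_one_cons]

theorem ilen_tupleOfPath (w : List Bool) : ilen (tupleOfPath w) = |pathMap w 1 - pathMap w 0| := by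
  rw [ilen, cf_tupleOfPath, cf_dropLast_tupleOfPath]

theorem theta_tupleOfPath (w : List Bool) : theta (tupleOfPath w) = pathMap w (1 / 2) := by
  rw [theta, ← tupleOfPath_concat_true, cf_tupleOfPath, pathMap_concat, fareyBranch_one]

theorem theta_tupleOfPath_dropLast {w : List Bool} (hw : w ≠ []) :
    theta (tupleOfPath w.dropLast) = cf (tupleOfPath w) := by
  obtain ⟨v, b, rfl⟩ := exists_eq_concat hw
  rw [List.dropLast_concat, theta_tupleOfPath, cf_tupleOfPath, pathMap_concat, fareyBranch_one]

theorem theta_K_tupleOfPath (w : List Bool) :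
    theta (K (tupleOfPath w)) = 1 - theta (tupleOfPath w) := by
  rw [K_tupleOfPath, theta_tupleOfPath, theta_tupleOfPath]
  rcases w with _ | ⟨b, w⟩
  · norm_num [pathMap]
  · exact fareyBranch_not b (pathMap_nonneg w (by norm_num))

theorem theta_PiL {a : List ℕ} (ha : IsX a) (ha1 : a ≠ [1]) :
    theta (PiL a) = 1 - cf a.reverse := by
  obtain ⟨w, hw, rfl⟩ := exists_path_ne_nil ha ha1
  rw [PiL_tupleOfPath hw, theta_K_tupleOfPath,
    theta_tupleOfPath_dropLast (List.reverse_ne_nil_iff.2 hw), tupleOfPath_reverse]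

theorem ilen_div_ilen_TpF {a : List ℕ} (ha : IsX a) (ha1 : a ≠ [1]) :
    ilen a / ilen (TpF a) = 1 - cf a.reverse := by
  obtain ⟨w, hw, rfl⟩ := exists_path_ne_nil ha ha1
  obtain ⟨v, b, rfl⟩ := exists_eq_concat hw
  have hlen : |pathMap v (1 : ℚ) - pathMap v 0| ≠ 0 :=
    abs_ne_zero.2 (sub_ne_zero.2 (pathMap_one_ne_pathMap_zero v))
  rw [TpF_tupleOfPath hw, List.dropLast_concat, ilen_tupleOfPath, ilen_tupleOfPath,
    abs_pathMap_concat_sub, mul_div_cancel_right₀ _ hlen, ← tupleOfPath_reverse,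
    List.reverse_concat, cf_tupleOfPath]

end ContinuedFractions

/-- The Lebesgue transition function is symmetric under `J`: `Π` represents it,
in the sense `θ(Π a) = π_λ(a) = |I(a)| / |I(T_{φF} a)|`, and `Π(J a) = J(Π a)`. -/
theorem lebesgue_J_symmetry (a : List ℕ) (h : IsX a) (h1 : a ≠ [1]) :
    theta (PiL a) = ilen a / ilen (TpF a) ∧ PiL (J a) = J (PiL a) :=
  ⟨(theta_PiL h h1).trans (ilen_div_ilen_TpF h h1).symm, PiL_J h h1⟩
end

section
/- The product of the Lebesgue transition probabilities along the lineage of a node equals the length of its Farey interval: for every a = (n_1,…,n_k) ∈ X, the product over i = 0, 1, …, ‖a‖−1 of (1 − [0; reversal of T_{φF}^i(a)]) equals 1/(⟨n_1,…,n_{k−1}⟩·⟨n_1,…,n_k⟩); in particular this product is the reciprocal of a positive integer. -/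
/-!
`1 − [0; reversal of a]` is the conditional Lebesgue measure of the Farey interval of `a` inside the
Farey interval of its parent `T_{φF}(a)`. With `D(a) = ⟨n₁, …, n_{k−1}⟩⟨n₁, …, n_k⟩`, the recursion
of continuants turns this into `1 − [0; reversal of a] = D(T_{φF}(a)) / D(a)`, so the product along
the lineage telescopes down to the root `(1)`, where `D = 1`.
-/

theorem contAux_pos : ∀ {b : List ℕ}, (∀ n ∈ b, 0 < n) → 0 < contAux b
  | [], _ => Nat.one_pos
  | [_], hb => List.forall_mem_singleton.1 hb
  | _ :: m :: r, hb =>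
    have ⟨hn, ht⟩ := List.forall_mem_cons.1 hb
    Nat.add_pos_left (Nat.mul_pos hn (contAux_pos (b := m :: r) ht)) _

theorem contAux_add_one_cons (n : ℕ) (t : List ℕ) :
    contAux ((n + 1) :: t) = contAux (n :: t) + contAux t := by
  cases t with
  | nil => rfl
  | cons m r => simp only [contAux]; ring

theorem cf_cons_eq_div (n : ℕ) {t : List ℕ} (ht : ∀ x ∈ t, 0 < x) :
    cf (n :: t) = (contAux t : ℚ) / contAux (n :: t) := by
  induction t generalizing n with
  | nil => simp [cf, contAux]
  | cons m r ih =>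
    have hpos : (0 : ℚ) < contAux (m :: r) := mod_cast contAux_pos ht
    calc cf (n :: m :: r)
        = 1 / (n + contAux r / contAux (m :: r)) := by
          rw [cf, ih m (List.forall_mem_cons.1 ht).2]
      _ = contAux (m :: r) / (n * contAux (m :: r) + contAux r) := by
          rw [add_div' _ _ _ hpos.ne', one_div_div]
      _ = contAux (m :: r) / contAux (n :: m :: r) := by
          simp only [contAux, Nat.cast_add, Nat.cast_mul]

theorem cont_pos {a : List ℕ} (ha : ∀ n ∈ a, 0 < n) : 0 < cont a :=
  contAux_pos fun n hn => ha n (List.mem_reverse.1 hn)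

theorem cont_concat_add_one (t : List ℕ) (n : ℕ) :
    cont (t ++ [n + 1]) = cont (t ++ [n]) + cont t := by
  simpa [cont] using contAux_add_one_cons n t.reverse

theorem cont_concat_zero {t : List ℕ} (ht : t ≠ []) : cont (t ++ [0]) = cont t.dropLast := by
  obtain ⟨s, m, rfl⟩ := t.eq_nil_or_concat'.resolve_left ht
  simp [cont, contAux]

theorem cf_reverse_concat {t : List ℕ} (ht : ∀ x ∈ t, 0 < x) (n : ℕ) :
    cf (t ++ [n]).reverse = (cont t : ℚ) / cont (t ++ [n]) := by
  simpa [cont] using cf_cons_eq_div n (t := t.reverse) (by simpa using ht)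

theorem one_sub_cf_reverse_concat_add_one {t : List ℕ} (ht : ∀ x ∈ t, 0 < x) (n : ℕ) :
    1 - cf (t ++ [n + 1]).reverse = (cont (t ++ [n]) : ℚ) / cont (t ++ [n + 1]) := by
  have hpos : (0 : ℚ) < cont (t ++ [n + 1]) := mod_cast cont_pos (by simpa [or_imp, forall_and])
  rw [cf_reverse_concat ht, one_sub_div hpos.ne', cont_concat_add_one, Nat.cast_add,
    add_sub_cancel_right]

theorem TpF_concat_one (t : List ℕ) : TpF (t ++ [1]) = t := by
  simp [TpF, TF]

theorem TpF_concat_add_two (t : List ℕ) (n : ℕ) : TpF (t ++ [n + 2]) = t ++ [n + 1] := by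
  simp [TpF, TF]

theorem isX_concat_add_one {t : List ℕ} {n : ℕ} : IsX (t ++ [n + 1]) ↔ ∀ x ∈ t, 0 < x := by
  simp [IsX, or_imp, forall_and]

theorem isX_singleton_one : IsX [1] :=
  isX_concat_add_one (t := []).2 (by simp)

theorem IsX.exists_eq_concat_add_one {a : List ℕ} (ha : IsX a) : ∃ t n, a = t ++ [n + 1] := by
  obtain ⟨t, m, rfl⟩ := a.eq_nil_or_concat'.resolve_left ha.1
  exact ⟨t, m - 1, by rw [Nat.sub_add_cancel (ha.2 m (by simp))]⟩

theorem IsX.isX_TpF {a : List ℕ} (ha : IsX a) (ha₁ : a ≠ [1]) : IsX (TpF a) := by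
  obtain ⟨t, n, rfl⟩ := ha.exists_eq_concat_add_one
  have ht := isX_concat_add_one.1 ha
  cases n with
  | zero => exact (TpF_concat_one t).symm ▸ ⟨fun h => ha₁ (by simp [h]), ht⟩
  | succ n => exact (TpF_concat_add_two t n).symm ▸ isX_concat_add_one.2 ht

theorem IsX.sum_TpF_add_one {a : List ℕ} (ha : IsX a) : (TpF a).sum + 1 = a.sum := by
  obtain ⟨t, n, rfl⟩ := ha.exists_eq_concat_add_one
  cases n with
  | zero => simp [TpF_concat_one]
  | succ n => simp [TpF_concat_add_two]; omega

theorem IsX.sum_pos {a : List ℕ} (ha : IsX a) : 0 < a.sum :=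
  ha.sum_TpF_add_one ▸ Nat.succ_pos _

@[elab_as_elim]
theorem IsX.induction_TpF {P : (a : List ℕ) → IsX a → Prop} (root : P [1] isX_singleton_one)
    (child : ∀ (a : List ℕ) (ha : IsX a) (ha₁ : a ≠ [1]),
      P (TpF a) (ha.isX_TpF ha₁) → P a ha)
    {a : List ℕ} (ha : IsX a) : P a ha := by
  induction hN : a.sum generalizing a with
  | zero => exact absurd hN ha.sum_pos.ne'
  | succ N ih =>
    by_cases ha₁ : a = [1]
    · subst ha₁
      exact root
    · have hsum : (TpF a).sum = N := Nat.succ_injective (ha.sum_TpF_add_one.trans hN)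
      exact child a ha ha₁ (ih (ha.isX_TpF ha₁) hsum)

/-- The product of the denominators `⟨n₁, …, n_{k−1}⟩` and `⟨n₁, …, n_k⟩` of the endpoints of the
Farey interval `I(a)`. These endpoints are Farey neighbours, so this is the reciprocal of the length
of `I(a)`; being a natural number, it is more convenient than the length itself. -/
def intervalDenom (a : List ℕ) : ℕ := cont a.dropLast * cont a

theorem IsX.intervalDenom_pos {a : List ℕ} (ha : IsX a) : 0 < intervalDenom a :=
  Nat.mul_pos (cont_pos fun n hn => ha.2 n (List.mem_of_mem_dropLast hn)) (cont_pos ha.2)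

theorem intervalDenom_concat (t : List ℕ) (n : ℕ) :
    intervalDenom (t ++ [n]) = cont t * cont (t ++ [n]) := by
  rw [intervalDenom, List.dropLast_concat]

theorem intervalDenom_TpF_concat_add_one {t : List ℕ} {n : ℕ} (h : t ++ [n + 1] ≠ [1]) :
    intervalDenom (TpF (t ++ [n + 1])) = cont t * cont (t ++ [n]) := by
  cases n with
  | zero =>
    have ht : t ≠ [] := fun ht => h (by simp [ht])
    rw [TpF_concat_one, cont_concat_zero ht, intervalDenom, mul_comm]
  | succ n => rw [TpF_concat_add_two, intervalDenom_concat]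

theorem IsX.one_sub_cf_reverse {a : List ℕ} (ha : IsX a) (ha₁ : a ≠ [1]) :
    1 - cf a.reverse = (intervalDenom (TpF a) : ℚ) / intervalDenom a := by
  obtain ⟨t, n, rfl⟩ := ha.exists_eq_concat_add_one
  have ht := isX_concat_add_one.1 ha
  have hpos : (0 : ℚ) < cont t := mod_cast cont_pos ht
  rw [one_sub_cf_reverse_concat_add_one ht, intervalDenom_TpF_concat_add_one ha₁,
    intervalDenom_concat, Nat.cast_mul, Nat.cast_mul, mul_div_mul_left _ _ hpos.ne']

theorem IsX.prod_one_sub_cf_reverse_iterate_TpF {a : List ℕ} (ha : IsX a) :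
    ∏ i ∈ Finset.range (a.sum - 1), (1 - cf (TpF^[i] a).reverse) =
      1 / (intervalDenom a : ℚ) := by
  induction ha using IsX.induction_TpF with
  | root => simp [intervalDenom, cont, contAux]
  | child a ha ha₁ ih =>
    have hparent : IsX (TpF a) := ha.isX_TpF ha₁
    have hsum : a.sum - 1 = (TpF a).sum - 1 + 1 := by
      have := ha.sum_TpF_add_one
      have := hparent.sum_pos
      omega
    have hpos : (0 : ℚ) < intervalDenom (TpF a) := mod_cast hparent.intervalDenom_pos
    rw [hsum, Finset.prod_range_succ']
    simp only [Function.iterate_succ_apply, Function.iterate_zero_apply]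
    rw [ih, ha.one_sub_cf_reverse ha₁, one_div_mul_eq_div, div_right_comm, div_self hpos.ne']

/-- The product of the Lebesgue transition probabilities along the lineage of a
node equals the length of its Farey interval: the product over `i < ‖a‖` of
`1 − [0; reversal of T_{φF}^[i] a]` equals
`1 / (⟨n₁, …, n_{k−1}⟩ * ⟨n₁, …, n_k⟩)`; in particular this product is the
reciprocal of a positive integer. -/
theorem lineage_product (a : List ℕ) (h : IsX a) :
    (∏ i ∈ Finset.range (a.sum - 1), (1 - cf ((TpF^[i] a).reverse))
        = 1 / ((cont a.dropLast : ℚ) * (cont a : ℚ))) ∧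
    ∃ m : ℕ, 0 < m ∧
      (∏ i ∈ Finset.range (a.sum - 1), (1 - cf ((TpF^[i] a).reverse))) = 1 / (m : ℚ) := by
  have hprod := h.prod_one_sub_cf_reverse_iterate_TpF
  refine ⟨?_, intervalDenom a, h.intervalDenom_pos, hprod⟩
  rw [hprod, intervalDenom, Nat.cast_mul]
end
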